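/- Let (ξ_n)_{n≥1} be i.i.d. real random variables satisfying E[exp(ξ_1)] ≤ 1 (as holds when ξ_n = log(f_1(X_n)/f_0(X_n)) is the log-likelihood ratio of i.i.d. observations X_n distributed with density f_0). Let (C_n)_{n≥0} be the CuSum sequence started at 0 and, for A ≥ 0, let τ_C = inf{n ≥ 1 : C_n > A}. Then E[τ_C] ≥ e^A; equivalently, with A = |log α| for α ∈ (0,1], the false alarm rate satisfies FAR(τ_C) = 1/E[τ_C] ≤ α. -/

import Mathlib

open MeasureTheory Filter Set ProbabilityTheory
open scoped ENNReal

/-- CuSum sequence started at `c`, driven by the sequence `ξ`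
(`ξ n` is the `(n+1)`-th increment, so the sequence is indexed from 1 via `n ↦ ξ (n-1)`). -/
def cusum (ξ : ℕ → ℝ) (c : ℝ) : ℕ → ℝ
  | 0 => c
  | n + 1 => max 0 (cusum ξ c n + ξ n)
/-- First time `n ≥ 1` at which `P n` holds, valued in `ℕ∞` with `inf ∅ = ∞`. -/
noncomputable def firstTime (P : ℕ → Prop) : ℕ∞ :=
  sInf ((↑) '' {n : ℕ | 1 ≤ n ∧ P n})

/-!
The Shiryaev-Roberts statistic `R (n + 1) = (1 + R n) * exp (ξ n)` dominates `exp C` wherever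
`C > 0`, so `exp A ≤ R τ` at the alarm. Since `E[exp (ξ n) | ℱ n] ≤ 1`, the conditional mean of `R`
grows by at most one per step, and optional stopping gives `exp A ≤ E[R τ] ≤ E[τ]`.
-/

section FirstTime

variable {Ω : Type*} {mΩ : MeasurableSpace Ω}

lemma firstTime_le_coe_iff {p : ℕ → Prop} {n : ℕ} :
    firstTime p ≤ n ↔ ∃ k ≤ n, 1 ≤ k ∧ p k := by
  constructor
  · intro h
    obtain ⟨k, hk, hkn⟩ := sInf_lt_iff.1 (h.trans_lt (ENat.natCast_lt_natCast.2 n.lt_succ_self))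
    obtain ⟨k, hpk, rfl⟩ := hk
    exact ⟨k, Nat.lt_succ_iff.1 (ENat.natCast_lt_natCast.1 hkn), hpk⟩
  · rintro ⟨k, hkn, hpk⟩
    exact sInf_le_of_le (mem_image_of_mem _ hpk) (ENat.natCast_le_natCast.2 hkn)

lemma of_firstTime_eq_coe {p : ℕ → Prop} {n : ℕ} (h : firstTime p = n) : p n := by
  obtain ⟨k, hkn, hk, hpk⟩ := firstTime_le_coe_iff.1 h.le
  have hnk : n ≤ k := ENat.natCast_le_natCast.1 (h ▸ firstTime_le_coe_iff.2 ⟨k, le_rfl, hk, hpk⟩)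
  exact le_antisymm hkn hnk ▸ hpk

lemma isStoppingTime_firstTime {ℱ : Filtration ℕ mΩ} {p : ℕ → Ω → Prop}
    (hp : ∀ n, MeasurableSet[ℱ n] {ω | p n ω}) :
    IsStoppingTime ℱ fun ω => firstTime (p · ω) := by
  intro n
  have hset : {ω | firstTime (p · ω) ≤ n} = ⋃ k ∈ Icc 1 n, {ω | p k ω} := by
    ext ω
    simp only [mem_ofPred_eq, firstTime_le_coe_iff, mem_iUnion, mem_Icc, exists_prop]
    exact exists_congr fun k => by tauto
  change MeasurableSet[ℱ n] {ω | firstTime (p · ω) ≤ n}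
  rw [hset]
  exact .biUnion (to_countable _) fun k hk => ℱ.mono hk.2 _ (hp k)

end FirstTime

section OptionalStopping

variable {Ω : Type*} {mΩ : MeasurableSpace Ω} {μ : Measure Ω} {ℱ : Filtration ℕ mΩ}
  {u : ℕ → Ω → ℝ≥0∞} {τ : Ω → ℕ∞}

lemma lintegral_stoppedProcess_succ_le (hτ : IsStoppingTime ℱ τ) {n : ℕ}
    (hu : ∀ s, MeasurableSet[ℱ n] s → ∫⁻ ω in s, u (n + 1) ω ∂μ ≤ μ s + ∫⁻ ω in s, u n ω ∂μ) :
    ∫⁻ ω, stoppedProcess u τ (n + 1) ω ∂μ ≤ ∫⁻ ω, stoppedProcess u τ n ω ∂μ + μ {ω | n < τ ω} := by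
  have hrun : MeasurableSet[ℱ n] {ω | n < τ ω} := hτ.measurableSet_gt n
  have hrun' := ℱ.le n _ hrun
  have hstopped : ∫⁻ ω in {ω | n < τ ω}ᶜ, stoppedProcess u τ (n + 1) ω ∂μ =
      ∫⁻ ω in {ω | n < τ ω}ᶜ, stoppedProcess u τ n ω ∂μ := by
    refine setLIntegral_congr_fun hrun'.compl fun ω hω => ?_
    have hle : τ ω ≤ n := not_lt.1 hω
    have hle' : τ ω ≤ (n + 1 : ℕ) := hle.trans (ENat.natCast_le_natCast.2 n.le_succ)
    exact (stoppedProcess_eq_of_ge hle').trans (stoppedProcess_eq_of_ge hle).symm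
  have hrunning : ∫⁻ ω in {ω | n < τ ω}, stoppedProcess u τ (n + 1) ω ∂μ ≤
      μ {ω | n < τ ω} + ∫⁻ ω in {ω | n < τ ω}, stoppedProcess u τ n ω ∂μ := by
    calc ∫⁻ ω in {ω | n < τ ω}, stoppedProcess u τ (n + 1) ω ∂μ
        = ∫⁻ ω in {ω | n < τ ω}, u (n + 1) ω ∂μ :=
          setLIntegral_congr_fun hrun' fun ω hω =>
            stoppedProcess_eq_of_le (ENat.natCast_add_one_le_iff.2 hω)
      _ ≤ μ {ω | n < τ ω} + ∫⁻ ω in {ω | n < τ ω}, u n ω ∂μ := hu _ hrun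
      _ = μ {ω | n < τ ω} + ∫⁻ ω in {ω | n < τ ω}, stoppedProcess u τ n ω ∂μ := by
          rw [setLIntegral_congr_fun hrun' fun ω (hω : n < τ ω) =>
            (stoppedProcess_eq_of_le hω.le).symm]
  rw [← lintegral_add_compl _ hrun', ← lintegral_add_compl (stoppedProcess u τ n) hrun', hstopped]
  exact (add_le_add_left hrunning _).trans_eq (by ring)

lemma toENNReal_min_add_indicator (τ : Ω → ℕ∞) (n : ℕ) (ω : Ω) :
    ((min (n : ℕ∞) (τ ω) : ℕ∞) : ℝ≥0∞) + {ω | n < τ ω}.indicator 1 ω =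
      (min ((n + 1 : ℕ) : ℕ∞) (τ ω) : ℕ∞) := by
  rcases lt_or_ge (n : ℕ∞) (τ ω) with hlt | hle
  · have hlt' : ((n + 1 : ℕ) : ℕ∞) ≤ τ ω := ENat.natCast_add_one_le_iff.2 hlt
    rw [indicator_of_mem (show ω ∈ {ω | n < τ ω} from hlt), min_eq_left hlt.le, min_eq_left hlt']
    simp
  · rw [indicator_of_notMem (show ω ∉ {ω | n < τ ω} from not_lt.2 hle), add_zero,
      min_eq_right hle, min_eq_right (hle.trans (ENat.natCast_le_natCast.2 n.le_succ))]

lemma lintegral_stoppedProcess_le_add_lintegral_min (hτ : IsStoppingTime ℱ τ)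
    (hu : ∀ n s, MeasurableSet[ℱ n] s → ∫⁻ ω in s, u (n + 1) ω ∂μ ≤ μ s + ∫⁻ ω in s, u n ω ∂μ)
    (n : ℕ) :
    ∫⁻ ω, stoppedProcess u τ n ω ∂μ ≤ ∫⁻ ω, u 0 ω ∂μ + ∫⁻ ω, (min (n : ℕ∞) (τ ω) : ℕ∞) ∂μ := by
  induction n with
  | zero =>
    have h0 : stoppedProcess u τ 0 = u 0 := funext fun ω => stoppedProcess_eq_of_le zero_le
    rw [h0]
    exact le_self_add
  | succ n ih =>
    have hrun : MeasurableSet {ω | n < τ ω} := ℱ.le n _ (hτ.measurableSet_gt n)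
    calc ∫⁻ ω, stoppedProcess u τ (n + 1) ω ∂μ
        ≤ ∫⁻ ω, stoppedProcess u τ n ω ∂μ + μ {ω | n < τ ω} :=
          lintegral_stoppedProcess_succ_le hτ (hu n)
      _ ≤ ∫⁻ ω, u 0 ω ∂μ + ∫⁻ ω, (min (n : ℕ∞) (τ ω) : ℕ∞) ∂μ + μ {ω | n < τ ω} := by gcongr
      _ = ∫⁻ ω, u 0 ω ∂μ + ∫⁻ ω, (min ((n + 1 : ℕ) : ℕ∞) (τ ω) : ℕ∞) ∂μ := by
          rw [add_assoc, ← lintegral_indicator_one hrun,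
            ← lintegral_add_right _ (measurable_one.indicator hrun)]
          simp only [toENNReal_min_add_indicator]

lemma measurable_stoppingTime (hτ : IsStoppingTime ℱ τ) : Measurable τ :=
  ENat.measurable_iff.2 fun n => ℱ.le n _ (hτ.measurableSet_eq n)

lemma measure_iUnion_stoppingTime_le_of_lintegral_ne_top (hτ : IsStoppingTime ℱ τ)
    (hfin : ∫⁻ ω, (τ ω : ℝ≥0∞) ∂μ ≠ ∞) :
    μ (⋃ n : ℕ, {ω | τ ω ≤ n}) = μ univ := by
  have hmeas : Measurable fun ω => (τ ω : ℝ≥0∞) :=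
    (measurable_from_top (f := ENat.toENNReal)).comp (measurable_stoppingTime hτ)
  refine measure_congr (eventuallyEq_univ.2 ?_)
  filter_upwards [ae_lt_top hmeas hfin] with ω hω
  obtain ⟨n, hn⟩ := ENat.ne_top_iff_exists.1 (ENat.toENNReal_lt_top.1 hω).ne
  exact mem_iUnion.2 ⟨n, hn.ge⟩

lemma mul_measure_univ_le_add_lintegral_stoppingTime (hτ : IsStoppingTime ℱ τ)
    (hu : ∀ n s, MeasurableSet[ℱ n] s → ∫⁻ ω in s, u (n + 1) ω ∂μ ≤ μ s + ∫⁻ ω in s, u n ω ∂μ)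
    {c : ℝ≥0∞} (hc : ∀ (n : ℕ) ω, τ ω = n → c ≤ u n ω) :
    c * μ univ ≤ ∫⁻ ω, u 0 ω ∂μ + ∫⁻ ω, (τ ω : ℝ≥0∞) ∂μ := by
  by_cases hfin : ∫⁻ ω, (τ ω : ℝ≥0∞) ∂μ = ∞
  · simp [hfin]
  have hmono : Monotone fun n : ℕ => {ω | τ ω ≤ n} :=
    fun m n hmn ω hω => le_trans hω (ENat.natCast_le_natCast.2 hmn)
  rw [← measure_iUnion_stoppingTime_le_of_lintegral_ne_top hτ hfin, hmono.measure_iUnion,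
    ENNReal.mul_iSup]
  refine iSup_le fun n => ?_
  have hstopped : ∀ ω ∈ {ω | τ ω ≤ n}, c ≤ stoppedProcess u τ n ω := by
    intro ω hω
    obtain ⟨k, hk⟩ := ENat.ne_top_iff_exists.1 (ne_top_of_le_ne_top (ENat.natCast_ne_top n) hω)
    rw [stoppedProcess_eq_of_ge hω, ← hk]
    exact hc k ω hk.symm
  calc c * μ {ω | τ ω ≤ n} = ∫⁻ _ in {ω | τ ω ≤ n}, c ∂μ := (setLIntegral_const _ _).symm
    _ ≤ ∫⁻ ω in {ω | τ ω ≤ n}, stoppedProcess u τ n ω ∂μ :=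
        setLIntegral_mono' (ℱ.le n _ (hτ n)) hstopped
    _ ≤ ∫⁻ ω, stoppedProcess u τ n ω ∂μ := setLIntegral_le_lintegral _ _
    _ ≤ ∫⁻ ω, u 0 ω ∂μ + ∫⁻ ω, (min (n : ℕ∞) (τ ω) : ℕ∞) ∂μ :=
        lintegral_stoppedProcess_le_add_lintegral_min hτ hu n
    _ ≤ ∫⁻ ω, u 0 ω ∂μ + ∫⁻ ω, (τ ω : ℝ≥0∞) ∂μ := by
        gcongr
        exact min_le_right _ _

end OptionalStopping

section ConditionalMean

variable {Ω : Type*} {m m' mΩ : MeasurableSpace Ω} {μ : Measure Ω} {f g : Ω → ℝ≥0∞} {s : Set Ω}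

lemma lintegral_mul_le_of_setLIntegral_le_measure (hm : m ≤ mΩ) (hf : Measurable f)
    (h : ∀ s, MeasurableSet[m] s → ∫⁻ ω in s, f ω ∂μ ≤ μ s) (hg : Measurable[m] g) :
    ∫⁻ ω, g ω * f ω ∂μ ≤ ∫⁻ ω, g ω ∂μ := by
  have htrim : (μ.withDensity f).trim hm ≤ μ.trim hm := by
    refine Measure.le_iff.2 fun s hs => ?_
    rw [trim_measurableSet_eq hm hs, trim_measurableSet_eq hm hs, withDensity_apply _ (hm s hs)]
    exact h s hs
  calc ∫⁻ ω, g ω * f ω ∂μ = ∫⁻ ω, g ω ∂μ.withDensity f := by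
        rw [lintegral_withDensity_eq_lintegral_mul _ hf (hg.mono hm le_rfl)]
        simp only [Pi.mul_apply, mul_comm]
    _ = ∫⁻ ω, g ω ∂(μ.withDensity f).trim hm := (lintegral_trim hm hg).symm
    _ ≤ ∫⁻ ω, g ω ∂μ.trim hm := lintegral_mono' htrim le_rfl
    _ = ∫⁻ ω, g ω ∂μ := lintegral_trim hm hg

lemma setLIntegral_mul_le_of_setLIntegral_le_measure (hm : m ≤ mΩ) (hf : Measurable f)
    (h : ∀ s, MeasurableSet[m] s → ∫⁻ ω in s, f ω ∂μ ≤ μ s) (hg : Measurable[m] g)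
    (hs : MeasurableSet[m] s) :
    ∫⁻ ω in s, g ω * f ω ∂μ ≤ ∫⁻ ω in s, g ω ∂μ := by
  refine lintegral_mul_le_of_setLIntegral_le_measure hm hf (fun t ht => ?_) hg
  rw [Measure.restrict_restrict (hm t ht), Measure.restrict_apply (hm t ht)]
  exact h _ (ht.inter hs)

lemma setLIntegral_eq_lintegral_mul_measure_of_indep (hm' : m' ≤ mΩ) (hm : m ≤ mΩ)
    (hindep : Indep m' m μ) (hf : Measurable[m'] f) (hs : MeasurableSet[m] s) :
    ∫⁻ ω in s, f ω ∂μ = (∫⁻ ω, f ω ∂μ) * μ s := by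
  have hindep_s := indepSets_of_indepSets_of_le_right hindep (singleton_subset_iff.2 hs)
  calc ∫⁻ ω in s, f ω ∂μ = ∫⁻ ω, f ω * s.indicator (fun _ => 1) ω ∂μ := by
        rw [← lintegral_indicator (hm s hs)]
        simp only [← indicator_mul_right, mul_one]
    _ = (∫⁻ ω, f ω ∂μ) * ∫⁻ ω, s.indicator (fun _ => 1) ω ∂μ :=
        lintegral_mul_indicator_eq_lintegral_mul_lintegral_indicator hm' 1 (hm s hs) hindep_s hf
    _ = (∫⁻ ω, f ω ∂μ) * μ s := by rw [lintegral_indicator_const (hm s hs), one_mul]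

end ConditionalMean

section PastFiltration

variable {Ω ι β : Type*} {mΩ : MeasurableSpace Ω} [Preorder ι] [MeasurableSpace β]

/-- The filtration generated by the strict past of a process: its `i`-th σ-algebra is generated by
the `X j` with `j < i`. Unlike `Filtration.natural`, it excludes the present value `X i`. -/
def pastFiltration (X : ι → Ω → β) (hX : ∀ i, Measurable (X i)) : Filtration ι mΩ where
  seq i := ⨆ j ∈ Iio i, MeasurableSpace.comap (X j) inferInstance
  mono' _ _ hij := biSup_mono fun _ hk => lt_of_lt_of_le hk hij
  le' _ := iSup₂_le fun j _ => (hX j).comap_le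

variable {X : ι → Ω → β} (hX : ∀ i, Measurable (X i))

lemma measurable_pastFiltration {i j : ι} (hij : i < j) :
    Measurable[pastFiltration X hX j] (X i) :=
  measurable_iff_comap_le.2 <|
    le_iSup₂ (f := fun k (_ : k ∈ Iio j) => MeasurableSpace.comap (X k) inferInstance) i hij

lemma indep_comap_pastFiltration {μ : Measure Ω} (hindep : iIndepFun X μ) (i : ι) :
    Indep (MeasurableSpace.comap (X i) inferInstance) (pastFiltration X hX i) μ := by
  have hdisj : Disjoint {i} (Iio i) := disjoint_singleton_left.2 (lt_irrefl i)
  simpa using! indep_iSup_of_disjoint (fun j => (hX j).comap_le) hindep hdisj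

lemma setLIntegral_comp_le_measure_of_iIndepFun {μ : Measure Ω} (hindep : iIndepFun X μ)
    {f : β → ℝ≥0∞} (hf : Measurable f) {i : ι} (hmean : ∫⁻ ω, f (X i ω) ∂μ ≤ 1) {s : Set Ω}
    (hs : MeasurableSet[pastFiltration X hX i] s) :
    ∫⁻ ω in s, f (X i ω) ∂μ ≤ μ s := by
  have hfX : Measurable[MeasurableSpace.comap (X i) inferInstance] fun ω => f (X i ω) :=
    hf.comp (comap_measurable (X i))
  rw [setLIntegral_eq_lintegral_mul_measure_of_indep (hX i).comap_le ((pastFiltration X hX).le i)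
    (indep_comap_pastFiltration hX hindep i) hfX hs]
  exact mul_le_of_le_one_left' hmean

end PastFiltration

section ShiryaevRoberts

/-- The Shiryaev-Roberts statistic `R n = ∑ k < n, exp (x k + ⋯ + x (n - 1))` in recursive form,
valued in `ℝ≥0∞` so that no integrability has to be tracked. -/
noncomputable def shiryaevRoberts (x : ℕ → ℝ) : ℕ → ℝ≥0∞
  | 0 => 0
  | n + 1 => (1 + shiryaevRoberts x n) * ENNReal.ofReal (Real.exp (x n))

lemma exp_cusum_le_max_one_shiryaevRoberts (x : ℕ → ℝ) (n : ℕ) :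
    ENNReal.ofReal (Real.exp (cusum x 0 n)) ≤ max 1 (shiryaevRoberts x n) := by
  induction n with
  | zero => simp [cusum]
  | succ n ih =>
    rw [cusum, shiryaevRoberts]
    rcases max_choice 0 (cusum x 0 n + x n) with hmax | hmax
    · simp [hmax]
    · rw [hmax, Real.exp_add, ENNReal.ofReal_mul (Real.exp_nonneg _)]
      refine le_max_of_le_right ?_
      gcongr
      exact ih.trans (max_le le_self_add le_add_self)

lemma exp_le_shiryaevRoberts_of_lt_cusum {A : ℝ} (hA : 0 ≤ A) {x : ℕ → ℝ} {n : ℕ}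
    (h : A < cusum x 0 n) : ENNReal.ofReal (Real.exp A) ≤ shiryaevRoberts x n := by
  have hone : 1 < ENNReal.ofReal (Real.exp (cusum x 0 n)) :=
    ENNReal.one_lt_ofReal.2 (Real.one_lt_exp_iff.2 (hA.trans_lt h))
  calc ENNReal.ofReal (Real.exp A) ≤ ENNReal.ofReal (Real.exp (cusum x 0 n)) := by gcongr
    _ ≤ shiryaevRoberts x n :=
        (le_max_iff.1 (exp_cusum_le_max_one_shiryaevRoberts x n)).resolve_left hone.not_ge

variable {Ω : Type*} {mΩ : MeasurableSpace Ω} {ℱ : Filtration ℕ mΩ} {ξ : ℕ → Ω → ℝ}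

lemma adapted_cusum (hξ : ∀ n, Measurable[ℱ (n + 1)] (ξ n)) (c : ℝ) :
    Adapted ℱ fun n ω => cusum (ξ · ω) c n := by
  intro n
  induction n with
  | zero => exact measurable_const
  | succ n ih => exact measurable_const.max ((ih.mono (ℱ.mono n.le_succ) le_rfl).add (hξ n))

lemma adapted_shiryaevRoberts (hξ : ∀ n, Measurable[ℱ (n + 1)] (ξ n)) :
    Adapted ℱ fun n ω => shiryaevRoberts (ξ · ω) n := by
  intro n
  induction n with
  | zero => exact measurable_const
  | succ n ih =>
    exact ((ih.mono (ℱ.mono n.le_succ) le_rfl).const_add 1).mul (hξ n).exp.ennreal_ofReal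

lemma setLIntegral_shiryaevRoberts_succ_le {μ : Measure Ω}
    (hξ : ∀ n, Measurable[ℱ (n + 1)] (ξ n)) {n : ℕ}
    (hexp : ∀ s, MeasurableSet[ℱ n] s → ∫⁻ ω in s, ENNReal.ofReal (Real.exp (ξ n ω)) ∂μ ≤ μ s)
    {s : Set Ω} (hs : MeasurableSet[ℱ n] s) :
    ∫⁻ ω in s, shiryaevRoberts (ξ · ω) (n + 1) ∂μ ≤
      μ s + ∫⁻ ω in s, shiryaevRoberts (ξ · ω) n ∂μ := by
  have hξn : Measurable (ξ n) := (hξ n).mono (ℱ.le _) le_rfl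
  calc ∫⁻ ω in s, shiryaevRoberts (ξ · ω) (n + 1) ∂μ
      ≤ ∫⁻ ω in s, 1 + shiryaevRoberts (ξ · ω) n ∂μ :=
        setLIntegral_mul_le_of_setLIntegral_le_measure (ℱ.le n) hξn.exp.ennreal_ofReal hexp
          ((adapted_shiryaevRoberts hξ n).const_add 1) hs
    _ = μ s + ∫⁻ ω in s, shiryaevRoberts (ξ · ω) n ∂μ := by
        rw [lintegral_add_left measurable_const, setLIntegral_one]

end ShiryaevRoberts

lemma inv_le_ofReal_of_exp_abs_log_le {α : ℝ} (hα : 0 < α) {t : ℝ≥0∞}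
    (ht : ENNReal.ofReal (Real.exp |Real.log α|) ≤ t) : t⁻¹ ≤ ENNReal.ofReal α := by
  rw [ENNReal.inv_le_iff_inv_le, ← ENNReal.ofReal_inv_of_pos hα]
  refine le_trans (ENNReal.ofReal_le_ofReal ?_) ht
  calc α⁻¹ = Real.exp (-Real.log α) := by rw [Real.exp_neg, Real.exp_log hα]
    _ ≤ Real.exp |Real.log α| := Real.exp_le_exp.2 (neg_le_abs _)

/-- `hexp` is `E[exp (ξ n) | ℱ n] ≤ 1` in integrated form, meaningful for an arbitrary `μ`. -/
theorem cusum_far_bound_general {Ω : Type*} {mΩ : MeasurableSpace Ω} (μ : Measure Ω)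
    (ℱ : Filtration ℕ mΩ) (ξ : ℕ → Ω → ℝ) (hξ : ∀ n, Measurable[ℱ (n + 1)] (ξ n))
    (hexp : ∀ n s, MeasurableSet[ℱ n] s → ∫⁻ ω in s, ENNReal.ofReal (Real.exp (ξ n ω)) ∂μ ≤ μ s)
    (A : ℝ) (hA : 0 ≤ A) :
    ENNReal.ofReal (Real.exp A) * μ univ ≤
      ∫⁻ ω, (firstTime (fun n => A < cusum (fun k => ξ k ω) 0 n) : ℝ≥0∞) ∂μ := by
  have hτ : IsStoppingTime ℱ fun ω => firstTime fun n => A < cusum (fun k => ξ k ω) 0 n :=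
    isStoppingTime_firstTime fun n => measurableSet_lt measurable_const (adapted_cusum hξ 0 n)
  simpa [shiryaevRoberts] using mul_measure_univ_le_add_lintegral_stoppingTime hτ
    (fun n _ hs => setLIntegral_shiryaevRoberts_succ_le hξ (hexp n) hs)
    fun _ _ hn => exp_le_shiryaevRoberts_of_lt_cusum hA (of_firstTime_eq_coe hn)

/-- If the i.i.d. increments satisfy `E[exp ξ₁] ≤ 1` (as for log-likelihood ratios under the
pre-change law), then for any threshold `A ≥ 0` the CuSum stopping time satisfies
`E[τ_C] ≥ e^A`; equivalently, with `A = |log α|` the false alarm rate `1/E[τ_C]` is at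
most `α`. -/
theorem cusum_far_bound {Ω : Type*} [MeasurableSpace Ω] (P : Measure Ω)
    [IsProbabilityMeasure P] (ξ : ℕ → Ω → ℝ) (hmeas : ∀ n, Measurable (ξ n))
    (hindep : iIndepFun ξ P)
    (hid : ∀ n, IdentDistrib (ξ n) (ξ 0) P P)
    (hexp : ∫⁻ ω, ENNReal.ofReal (Real.exp (ξ 0 ω)) ∂P ≤ 1)
    (A : ℝ) (hA : 0 ≤ A) :
    ENNReal.ofReal (Real.exp A) ≤
        ∫⁻ ω, (firstTime (fun n => A < cusum (fun k => ξ k ω) 0 n) : ℝ≥0∞) ∂P ∧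
      ∀ α : ℝ, 0 < α → α ≤ 1 → A = |Real.log α| →
        (∫⁻ ω, (firstTime (fun n => A < cusum (fun k => ξ k ω) 0 n) : ℝ≥0∞) ∂P)⁻¹ ≤
          ENNReal.ofReal α := by
  have hmean : ∀ n, ∫⁻ ω, ENNReal.ofReal (Real.exp (ξ n ω)) ∂P ≤ 1 := fun n =>
    ((hid n).comp Real.measurable_exp.ennreal_ofReal).lintegral_eq.trans_le hexp
  have hbound : ENNReal.ofReal (Real.exp A) ≤
      ∫⁻ ω, (firstTime (fun n => A < cusum (fun k => ξ k ω) 0 n) : ℝ≥0∞) ∂P := by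
    simpa only [measure_univ, mul_one] using
      cusum_far_bound_general P (pastFiltration ξ hmeas) ξ
        (fun n => measurable_pastFiltration hmeas n.lt_succ_self)
        (fun n _ hs => setLIntegral_comp_le_measure_of_iIndepFun hmeas hindep
          Real.measurable_exp.ennreal_ofReal (hmean n) hs) A hA
  exact ⟨hbound, fun α hα _ hAα => inv_le_ofReal_of_exp_abs_log_le hα (hAα ▸ hbound)⟩
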